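/- Let Φ = {γ ∈ ℝ : γ ≥ 0 and limsup_{k→∞} |cos k|^(k^γ) = 1}, where k ranges over the positive integers. Then sup Φ = 2·μ(π) − 2, where μ(π) is the irrationality measure of π. -/

import Mathlib

open Filter Real

/-- The irrationality measure of `α`: the infimum of the set of real `μ` such that
only finitely many rationals `p/q` (in lowest terms, `q ≥ 1`) satisfy
`0 < |α - p/q| < 1/q^μ`. -/
noncomputable def irrationalityMeasure (α : ℝ) : ℝ :=
  sInf {μ : ℝ |
    {r : ℚ | 0 < |α - (r : ℝ)| ∧ |α - (r : ℝ)| < 1 / (r.den : ℝ) ^ μ}.Finite}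

/-!
The quantity `1 - |cos k|` is comparable to the squared distance from `k` to `π ℤ`, hence to
`q ^ 2 * |π - k / q| ^ 2` for the nearest `q`. If approximations of exponent `μ` exist, this is of
size `k ^ (-2 (μ - 1))`, so `|cos k| ^ (k ^ γ)` comes close to `1` infinitely often for
`γ < 2 μ - 2`; and if `μ` is beaten for only finitely many `k / q`, it tends to `0` for
`γ > 2 μ - 2`.

Since `sInf ∅ = 0` in `ℝ`, one must also know that `π` has finite irrationality measure. Let `U t`
be the `(m + 1)`-fold convolution power of `(2 sin (t / 2)) ^ n`. Up to a phase it is a polynomial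
in `t` and `exp (I t)`, of degrees `m` and `n`, and it becomes integral over `ℤ[I]` after
multiplication by `m! * lcm (1, …, n) ^ m`, with divided powers of `t` absorbing the factorials.
At `t = π`, where `exp (I t) = -1`, the product `lcm (1, …, n) ^ m * U π` decays exponentially in
`n` once `m` is large, whereas `U π ≥ κ ^ n`. At `t = p / q`, with `exp (I t)` still replaced by
`-1`, the polynomial times `m! * q ^ m` is a Gaussian integer, so the polynomial is either zero or
at least `1 / (m! * q ^ m)` in modulus. If `2 ^ n` is a large multiple of `q ^ m`, both cases force
`|π - p / q|` to be at least exponentially small in `n`, that is, at least a negative power of `q`.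
-/

open scoped Nat Topology

section CosPowers

lemma abs_cos_pi_mul_sub_intCast (x : ℝ) (q : ℤ) : |cos (π * (x - q))| = |cos (π * x)| := by
  rw [mul_sub, mul_comm π (q : ℝ), cos_sub_int_mul_pi, abs_mul, abs_zpow, abs_neg, abs_one,
    one_zpow, one_mul]

lemma one_sub_mul_sq_le_abs_cos_pi_mul_rpow (x : ℝ) (q : ℤ) {e : ℝ} (he : 1 ≤ e) :
    1 - e * ((π * (x - q)) ^ 2 / 2) ≤ |cos (π * x)| ^ e := by
  rcases le_total ((π * (x - q)) ^ 2 / 2) 1 with hs | hs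
  · calc 1 - e * ((π * (x - q)) ^ 2 / 2) = 1 + e * -((π * (x - q)) ^ 2 / 2) := by ring
      _ ≤ (1 + -((π * (x - q)) ^ 2 / 2)) ^ e :=
          one_add_mul_self_le_rpow_one_add (by linarith) he
      _ ≤ |cos (π * x)| ^ e := by
          rw [← sub_eq_add_neg, ← abs_cos_pi_mul_sub_intCast x q]
          gcongr
          exact one_sub_sq_div_two_le_cos.trans (le_abs_self _)
  · have : 1 ≤ e * ((π * (x - q)) ^ 2 / 2) := one_le_mul_of_one_le_of_one_le he hs
    exact le_trans (by linarith) (rpow_nonneg (abs_nonneg _) e)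

lemma abs_cos_pi_mul_le_exp (x : ℝ) : |cos (π * x)| ≤ exp (-(2 * (x - round x) ^ 2)) := by
  have hδ : |π * (x - round x)| ≤ π / 2 := by
    rw [abs_mul, abs_of_pos pi_pos, div_eq_mul_one_div]
    exact mul_le_mul_of_nonneg_left (abs_sub_round x) pi_pos.le
  have hcos : 0 ≤ cos (π * (x - round x)) :=
    cos_nonneg_of_neg_pi_div_two_le_of_le (abs_le.1 hδ).1 (abs_le.1 hδ).2
  rw [← abs_cos_pi_mul_sub_intCast x (round x), abs_of_nonneg hcos]
  calc cos (π * (x - round x)) ≤ 1 - 2 / π ^ 2 * (π * (x - round x)) ^ 2 :=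
        cos_le_one_sub_mul_cos_sq (hδ.trans (half_le_self pi_pos.le))
    _ = -(2 * (x - round x) ^ 2) + 1 := by field_simp; ring
    _ ≤ exp (-(2 * (x - round x) ^ 2)) := add_one_le_exp _

variable {x : ℕ → ℝ} {σ γ : ℝ}

lemma tendsto_abs_cos_pi_mul_rpow_zero {c : ℝ} (hc : 0 < c)
    (hx : ∀ᶠ k : ℕ in atTop, c * (k : ℝ) ^ (-σ) ≤ |x k - round (x k)|) (hγ : 2 * σ < γ) :
    Tendsto (fun k : ℕ => |cos (π * x k)| ^ ((k : ℝ) ^ γ)) atTop (𝓝 0) := by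
  have hpow : Tendsto (fun k : ℕ => 2 * c ^ 2 * (k : ℝ) ^ (γ - 2 * σ)) atTop atTop :=
    ((tendsto_rpow_atTop (sub_pos.2 hγ)).comp tendsto_natCast_atTop_atTop).const_mul_atTop
      (by positivity)
  refine squeeze_zero' (.of_forall fun k => by positivity) ?_
    (tendsto_exp_neg_atTop_nhds_zero.comp hpow)
  filter_upwards [hx, eventually_gt_atTop 0] with k hk hk0
  have hk0 : (0 : ℝ) < k := mod_cast hk0
  have hsq : c ^ 2 * (k : ℝ) ^ (-(2 * σ)) ≤ (x k - round (x k)) ^ 2 := by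
    rw [← sq_abs (x k - _), show -(2 * σ) = -σ * (2 : ℕ) by push_cast; ring,
      rpow_mul_natCast hk0.le, ← mul_pow]
    gcongr
  calc |cos (π * x k)| ^ ((k : ℝ) ^ γ)
      ≤ exp (-(2 * (c ^ 2 * (k : ℝ) ^ (-(2 * σ))))) ^ ((k : ℝ) ^ γ) := by
        gcongr
        exact (abs_cos_pi_mul_le_exp _).trans (by gcongr)
    _ = exp (-(2 * c ^ 2 * (k : ℝ) ^ (γ - 2 * σ))) := by
        rw [← exp_mul, sub_eq_neg_add, rpow_add hk0]
        ring_nf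

lemma limsup_abs_cos_pi_mul_rpow_eq_one {C : ℝ}
    (hx : ∃ᶠ k : ℕ in atTop, |x k - round (x k)| ≤ C * (k : ℝ) ^ (-σ)) (hγ₀ : 0 ≤ γ)
    (hγ : γ < 2 * σ) :
    limsup (fun k : ℕ => |cos (π * x k)| ^ ((k : ℝ) ^ γ)) atTop = 1 := by
  have hle : ∀ k : ℕ, |cos (π * x k)| ^ ((k : ℝ) ^ γ) ≤ 1 := fun k =>
    rpow_le_one (abs_nonneg _) (abs_cos_le_one _) (by positivity)
  have hlower : ∃ᶠ k : ℕ in atTop, 1 - (π * C) ^ 2 / 2 * (k : ℝ) ^ (-(2 * σ - γ)) ≤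
      |cos (π * x k)| ^ ((k : ℝ) ^ γ) := by
    refine (hx.and_eventually (eventually_ge_atTop 1)).mono fun k ⟨hk, hk1⟩ => ?_
    have hk1 : (1 : ℝ) ≤ k := mod_cast hk1
    refine le_trans ?_ (one_sub_mul_sq_le_abs_cos_pi_mul_rpow (x k) (round (x k))
      (one_le_rpow hk1 hγ₀))
    calc 1 - (π * C) ^ 2 / 2 * (k : ℝ) ^ (-(2 * σ - γ))
        = 1 - (k : ℝ) ^ γ * ((π * (C * (k : ℝ) ^ (-σ))) ^ 2 / 2) := by
          rw [show -(2 * σ - γ) = γ + -σ * (2 : ℕ) by push_cast; ring,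
            rpow_add (by linarith), rpow_mul_natCast (by linarith)]
          ring
      _ ≤ 1 - (k : ℝ) ^ γ * ((π * |x k - round (x k)|) ^ 2 / 2) := by gcongr
      _ = 1 - (k : ℝ) ^ γ * ((π * (x k - round (x k))) ^ 2 / 2) := by
          rw [mul_pow, sq_abs, mul_pow]
  have hlim : Tendsto (fun k : ℕ => (π * C) ^ 2 / 2 * (k : ℝ) ^ (-(2 * σ - γ))) atTop (𝓝 0) := by
    simpa using ((tendsto_rpow_neg_atTop (sub_pos.2 hγ)).comp
      tendsto_natCast_atTop_atTop).const_mul ((π * C) ^ 2 / 2)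
  have hbdd : IsBoundedUnder (· ≤ ·) atTop (fun k : ℕ => |cos (π * x k)| ^ ((k : ℝ) ^ γ)) :=
    isBoundedUnder_of ⟨1, hle⟩
  have hbdd' : IsBoundedUnder (· ≥ ·) atTop (fun k : ℕ => |cos (π * x k)| ^ ((k : ℝ) ^ γ)) :=
    isBoundedUnder_of ⟨0, fun k => by positivity⟩
  refine le_antisymm (limsup_le_of_le hbdd'.isCoboundedUnder_le (.of_forall hle))
    (le_of_forall_lt_imp_le_of_dense fun b hb => le_limsup_of_frequently_le ?_ hbdd)
  have hsmall := hlim.eventually_le_const (sub_pos.2 hb)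
  exact (hlower.and_eventually hsmall).mono fun k hk => by linarith [hk.1, hk.2]

end CosPowers

section Approximants

/-- The rationals approximating `α` with exponent `μ`, whose finiteness defines
`irrationalityMeasure α`. -/
def approximants (α μ : ℝ) : Set ℚ :=
  {r : ℚ | 0 < |α - (r : ℝ)| ∧ |α - (r : ℝ)| < 1 / (r.den : ℝ) ^ μ}

variable {α μ : ℝ}

lemma one_le_den (r : ℚ) : (1 : ℝ) ≤ r.den := mod_cast r.den_pos

lemma approximants_anti : Antitone (approximants α) := by
  rintro μ ν hμν r ⟨hpos, hlt⟩
  refine ⟨hpos, hlt.trans_le ?_⟩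
  have := one_le_den r
  gcongr

lemma abs_sub_ratCast_pos_of_irrational (hα : Irrational α) (r : ℚ) : 0 < |α - r| :=
  abs_pos.2 (sub_ne_zero.2 (hα.ne_rat r))

lemma approximants_infinite_of_le_two (hα : Irrational α) (hμ : μ ≤ 2) :
    (approximants α μ).Infinite := by
  refine (infinite_rat_abs_sub_lt_one_div_den_sq_of_irrational hα).mono fun r hr =>
    approximants_anti hμ ⟨abs_sub_ratCast_pos_of_irrational hα r, ?_⟩
  rwa [rpow_two]

lemma abs_sub_lt_one_of_mem_approximants (hμ : 0 ≤ μ) {r : ℚ} (hr : r ∈ approximants α μ) :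
    |α - r| < 1 :=
  hr.2.trans_le (div_le_one_of_le₀ (one_le_rpow (one_le_den r) hμ) (by positivity))

lemma finite_setOf_den_le_abs_sub_lt (α : ℝ) (N : ℕ) :
    {r : ℚ | r.den ≤ N ∧ |α - r| < 1}.Finite := by
  obtain ⟨M, hM⟩ := exists_nat_ge ((|α| + 1) * N)
  refine (((Set.finite_Icc (-M : ℤ) M).prod (Set.finite_Iic N)).image
    fun x : ℤ × ℕ => (x.1 / x.2 : ℚ)).subset ?_
  rintro r ⟨hden, hr⟩
  refine ⟨(r.num, r.den), ⟨?_, hden⟩, r.num_div_den⟩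
  have hnum : |(r.num : ℝ)| ≤ M := by
    calc |(r.num : ℝ)| = |(r : ℝ)| * r.den := by
          rw [Rat.cast_def, abs_div, Nat.abs_cast,
            div_mul_cancel₀ _ (Nat.cast_ne_zero.2 r.den_ne_zero)]
      _ ≤ (|α| + 1) * N := by
          gcongr
          linarith [abs_sub_abs_le_abs_sub (r : ℝ) α, abs_sub_comm (r : ℝ) α]
      _ ≤ M := hM
  exact abs_le.1 (mod_cast hnum)

lemma exists_mem_approximants_den_gt (hμ : 0 ≤ μ) (h : (approximants α μ).Infinite) (N : ℕ) :
    ∃ r ∈ approximants α μ, N < r.den := by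
  by_contra! H
  exact h ((finite_setOf_den_le_abs_sub_lt α N).subset fun r hr =>
    ⟨H r hr, abs_sub_lt_one_of_mem_approximants hμ hr⟩)

lemma approximants_finite_of_le_abs_sub {c ν : ℝ} (hc : 0 < c) (hν : 0 ≤ ν)
    (H : ∀ r : ℚ, c / (r.den : ℝ) ^ ν ≤ |α - r|) (hμ : ν < μ) : (approximants α μ).Finite := by
  obtain ⟨N, hN⟩ := exists_nat_ge (c⁻¹ ^ (μ - ν)⁻¹)
  refine (finite_setOf_den_le_abs_sub_lt α N).subset fun r hr =>
    ⟨?_, abs_sub_lt_one_of_mem_approximants (hν.trans hμ.le) hr⟩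
  have hd : (0 : ℝ) < r.den := mod_cast r.den_pos
  have hpow : (r.den : ℝ) ^ (μ - ν) ≤ c⁻¹ := by
    have := (H r).trans hr.2.le
    rw [div_le_div_iff₀ (by positivity) (by positivity), one_mul] at this
    rw [rpow_sub hd, div_le_iff₀ (by positivity), inv_mul_eq_div, le_div_iff₀' hc]
    exact this
  exact_mod_cast ((le_rpow_inv_iff_of_pos hd.le (by positivity) (sub_pos.2 hμ)).2 hpow).trans hN

lemma exists_forall_div_den_rpow_le (hα : Irrational α) (hμ : 0 ≤ μ)
    (h : (approximants α μ).Finite) :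
    ∃ c > 0, ∀ r : ℚ, c / (r.den : ℝ) ^ μ ≤ |α - r| := by
  have hpos := abs_sub_ratCast_pos_of_irrational hα
  have hlt : ∀ᶠ c in 𝓝[>] (0 : ℝ), ∀ r ∈ approximants α μ, c < |α - r| :=
    (eventually_all_finite h).2 fun r _ => nhdsWithin_le_nhds (eventually_lt_nhds (hpos r))
  have hle : ∀ᶠ c in 𝓝[>] (0 : ℝ), c ≤ 1 := nhdsWithin_le_nhds (eventually_le_nhds one_pos)
  obtain ⟨c, ⟨hc, hc1⟩, hc0⟩ := ((hlt.and hle).and self_mem_nhdsWithin).exists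
  have hc0 : 0 < c := hc0
  refine ⟨c, hc0, fun r => ?_⟩
  by_cases hr : r ∈ approximants α μ
  · exact (div_le_self hc0.le (one_le_rpow (one_le_den r) hμ)).trans (hc r hr).le
  · have hge : 1 / (r.den : ℝ) ^ μ ≤ |α - r| := not_lt.1 fun hlt => hr ⟨hpos r, hlt⟩
    exact le_trans (by gcongr) hge

end Approximants

section IrrationalityMeasure

variable {α : ℝ}

lemma setOf_approximants_finite_subset (hα : Irrational α) :
    {μ | (approximants α μ).Finite} ⊆ Set.Ioi 2 := fun _ hμ =>
  not_le.1 fun h => approximants_infinite_of_le_two hα h hμ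

lemma two_le_irrationalityMeasure (hα : Irrational α) (h : ∃ μ, (approximants α μ).Finite) :
    2 ≤ irrationalityMeasure α :=
  le_csInf h fun _ hμ => (setOf_approximants_finite_subset hα hμ).le

lemma approximants_infinite_of_lt_irrationalityMeasure (hα : Irrational α) {μ : ℝ}
    (hμ : μ < irrationalityMeasure α) : (approximants α μ).Infinite :=
  notMem_of_lt_csInf (s := {μ | (approximants α μ).Finite}) hμ
    ⟨2, fun _ h => (setOf_approximants_finite_subset hα h).le⟩

lemma approximants_finite_of_irrationalityMeasure_lt (h : ∃ μ, (approximants α μ).Finite)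
    {μ : ℝ} (hμ : irrationalityMeasure α < μ) : (approximants α μ).Finite := by
  obtain ⟨ν, hν, hlt⟩ := exists_lt_of_csInf_lt h hμ
  exact Set.Finite.subset hν (approximants_anti hlt.le)

end IrrationalityMeasure

section Multiples

variable {α μ : ℝ}

lemma abs_div_sub_eq (hα : 0 < α) (k : ℝ) {q : ℝ} (hq : 0 < q) :
    |k / α - q| = q / α * |α - k / q| := by
  rw [abs_sub_comm, show q - k / α = q / α * (α - k / q) by field_simp, abs_mul,
    abs_of_pos (div_pos hq hα)]

lemma den_intCast_div_natCast_le (p : ℤ) {q : ℕ} (hq : 0 < q) : ((p : ℚ) / q).den ≤ q := by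
  have h := Rat.den_dvd p q
  rw [Rat.divInt_eq_div] at h
  exact Nat.le_of_dvd hq (mod_cast h)

lemma exists_eventually_le_abs_div_sub_round (hα : 0 < α) (hμ : 1 ≤ μ) {c : ℝ} (hc : 0 < c)
    (H : ∀ r : ℚ, c / (r.den : ℝ) ^ μ ≤ |α - r|) :
    ∃ c' > 0, ∀ᶠ k : ℕ in atTop,
      c' * (k : ℝ) ^ (-(μ - 1)) ≤ |(k : ℝ) / α - round ((k : ℝ) / α)| := by
  refine ⟨c / α * (α⁻¹ + 1) ^ (-(μ - 1)), by positivity, ?_⟩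
  filter_upwards [eventually_ge_atTop 1,
    tendsto_natCast_atTop_atTop.eventually_ge_atTop (2 * α)] with k hk1 hkα
  have hk1 : (1 : ℝ) ≤ k := mod_cast hk1
  obtain ⟨q, hq⟩ : ∃ q : ℕ, round ((k : ℝ) / α) = q :=
    Int.eq_ofNat_of_zero_le (by
      rw [round_eq]
      positivity)
  rw [hq, Int.cast_natCast]
  have hround := abs_le.1 (abs_sub_round ((k : ℝ) / α))
  rw [hq, Int.cast_natCast] at hround
  have hq0 : (0 : ℝ) < q := by linarith [hround.2, (le_div_iff₀ hα).2 hkα]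
  have hqk : (q : ℝ) ≤ (α⁻¹ + 1) * k := by
    rw [add_mul, inv_mul_eq_div]
    linarith [hround.1]
  have hden : ((((k : ℤ) : ℚ) / q).den : ℝ) ≤ q :=
    mod_cast den_intCast_div_natCast_le (k : ℤ) (Nat.cast_pos.1 hq0)
  calc c / α * (α⁻¹ + 1) ^ (-(μ - 1)) * (k : ℝ) ^ (-(μ - 1))
      = c / α * ((α⁻¹ + 1) * k) ^ (-(μ - 1)) := by
        rw [mul_rpow (by positivity) (by positivity), mul_assoc]
    _ ≤ c / α * (q : ℝ) ^ (-(μ - 1)) := by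
        gcongr ?_ * ?_
        exact rpow_le_rpow_of_nonpos hq0 hqk (by linarith)
    _ = q / α * (c / (q : ℝ) ^ μ) := by
        rw [neg_sub, rpow_sub hq0, rpow_one]
        ring
    _ ≤ q / α * (c / ((((k : ℤ) : ℚ) / q).den : ℝ) ^ μ) := by
        have := one_le_den (((k : ℤ) : ℚ) / q)
        gcongr
    _ ≤ q / α * |α - k / q| := by
        gcongr
        simpa using H (((k : ℤ) : ℚ) / q)
    _ = |(k : ℝ) / α - q| := (abs_div_sub_eq hα k hq0).symm

lemma abs_mul_den_sub_num_lt_one (hμ : 1 ≤ μ) {r : ℚ} (hr : r ∈ approximants α μ) :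
    |α * r.den - r.num| < 1 := by
  have hd1 := one_le_den r
  have hd0 : (0 : ℝ) < r.den := by linarith
  calc |α * r.den - r.num| = |α - r| * r.den := by
        rw [← abs_of_pos hd0, ← abs_mul, abs_of_pos hd0, sub_mul, Rat.cast_def,
          div_mul_cancel₀ _ hd0.ne']
    _ < 1 / (r.den : ℝ) ^ μ * r.den := by
        gcongr
        exact hr.2
    _ ≤ 1 := by
        rw [one_div_mul_eq_div]
        exact div_le_one_of_le₀ (self_le_rpow_of_one_le hd1 hμ) (by positivity)

lemma exists_frequently_abs_div_sub_round_le (hα : 0 < α) (hμ : 1 ≤ μ)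
    (h : (approximants α μ).Infinite) :
    ∃ C, ∃ᶠ k : ℕ in atTop,
      |(k : ℝ) / α - round ((k : ℝ) / α)| ≤ C * (k : ℝ) ^ (-(μ - 1)) := by
  refine ⟨1 / α * (α + 1) ^ (μ - 1), frequently_atTop.2 fun N => ?_⟩
  obtain ⟨M, hM⟩ := exists_nat_ge ((N + 1) / α)
  obtain ⟨r, hr, hrM⟩ := exists_mem_approximants_den_gt (by linarith) h M
  have hd1 := one_le_den r
  have hd0 : (0 : ℝ) < r.den := by linarith
  have hαd : N + 1 ≤ α * r.den := by
    rw [div_le_iff₀' hα] at hM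
    exact hM.trans (by gcongr)
  obtain ⟨hnum₁, hnum₂⟩ := abs_sub_lt_iff.1 (abs_mul_den_sub_num_lt_one hμ hr)
  obtain ⟨k, hk⟩ : ∃ k : ℕ, r.num = k := Int.eq_ofNat_of_zero_le <| by
    have : (0 : ℝ) ≤ r.num := by linarith [N.cast_nonneg (α := ℝ)]
    exact_mod_cast this
  rw [hk, Int.cast_natCast] at hnum₁ hnum₂
  have hkN : (N : ℝ) < k := by linarith
  refine ⟨k, mod_cast hkN.le, ?_⟩
  calc |(k : ℝ) / α - round ((k : ℝ) / α)| ≤ |(k : ℝ) / α - r.den| :=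
        mod_cast round_le ((k : ℝ) / α) r.den
    _ = r.den / α * |α - r| := by
        rw [abs_div_sub_eq hα k hd0, Rat.cast_def, hk, Int.cast_natCast]
    _ ≤ r.den / α * (1 / (r.den : ℝ) ^ μ) := by
        gcongr
        exact hr.2.le
    _ = 1 / α * (r.den : ℝ) ^ (-(μ - 1)) := by
        rw [neg_sub, rpow_sub hd0, rpow_one]
        ring
    _ ≤ 1 / α * (k / (α + 1)) ^ (-(μ - 1)) := by
        gcongr ?_ * ?_
        refine rpow_le_rpow_of_nonpos ?_ ?_ (by linarith)
        · exact div_pos (N.cast_nonneg.trans_lt hkN) (by linarith)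
        · rw [div_le_iff₀ (by linarith)]
          linarith
    _ = 1 / α * (α + 1) ^ (μ - 1) * (k : ℝ) ^ (-(μ - 1)) := by
        rw [div_rpow (by positivity) (by positivity), rpow_neg (by positivity : 0 ≤ α + 1),
          div_inv_eq_mul]
        ring

end Multiples

section ConvPow

/-- The `(m + 1)`-fold convolution power of `f` on the half-line `[0, ∞)`. -/
noncomputable def convPow (f : ℝ → ℝ) : ℕ → ℝ → ℝ
  | 0 => f
  | m + 1 => fun t => ∫ s in (0 : ℝ)..t, f (t - s) * convPow f m s

variable {f : ℝ → ℝ}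

lemma convPow_zero (f : ℝ → ℝ) : convPow f 0 = f := rfl

lemma convPow_succ (f : ℝ → ℝ) (m : ℕ) (t : ℝ) :
    convPow f (m + 1) t = ∫ s in (0 : ℝ)..t, f (t - s) * convPow f m s := rfl

lemma continuous_convPow (hf : Continuous f) (m : ℕ) : Continuous (convPow f m) := by
  induction m with
  | zero => exact hf
  | succ m ih =>
    exact intervalIntegral.continuous_parametric_intervalIntegral_of_continuous
      (f := fun t s => f (t - s) * convPow f m s) (by fun_prop) continuous_id

lemma abs_convPow_le {A r : ℝ} (hf : ∀ x, 0 ≤ x → |f x| ≤ A * exp (r * x)) (m : ℕ) {t : ℝ}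
    (ht : 0 ≤ t) : |convPow f m t| ≤ A ^ (m + 1) * exp (r * t) * t ^ m := by
  have hA : 0 ≤ A := by simpa using (abs_nonneg _).trans (hf 0 le_rfl)
  induction m generalizing t with
  | zero => simpa [convPow_zero] using hf t ht
  | succ m ih =>
    have hbound : ∀ s ∈ Set.uIoc 0 t,
        ‖f (t - s) * convPow f m s‖ ≤ A ^ (m + 2) * exp (r * t) * t ^ m := fun s hs => by
      rw [Set.uIoc_of_le ht] at hs
      calc ‖f (t - s) * convPow f m s‖ = |f (t - s)| * |convPow f m s| := abs_mul _ _
        _ ≤ A * exp (r * (t - s)) * (A ^ (m + 1) * exp (r * s) * s ^ m) := by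
            gcongr
            · exact hf _ (sub_nonneg.2 hs.2)
            · exact ih hs.1.le
        _ = A ^ (m + 2) * (exp (r * (t - s)) * exp (r * s)) * s ^ m := by ring
        _ = A ^ (m + 2) * exp (r * t) * s ^ m := by rw [← exp_add]; ring_nf
        _ ≤ A ^ (m + 2) * exp (r * t) * t ^ m := by
            have := hs.1.le
            have := hs.2
            gcongr
    calc |convPow f (m + 1) t| ≤ A ^ (m + 2) * exp (r * t) * t ^ m * |t - 0| :=
          intervalIntegral.norm_integral_le_of_norm_le_const hbound
      _ = A ^ (m + 2) * exp (r * t) * t ^ (m + 1) := by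
          rw [sub_zero, abs_of_nonneg ht, pow_succ t m, mul_assoc _ (t ^ m) t]

variable {T : ℝ}

lemma convPow_nonneg (hf : ∀ x ∈ Set.Icc 0 T, 0 ≤ f x) (m : ℕ) :
    ∀ t ∈ Set.Icc 0 T, 0 ≤ convPow f m t := by
  induction m with
  | zero => exact hf
  | succ m ih =>
    exact fun t ht => intervalIntegral.integral_nonneg ht.1 fun s hs =>
      mul_nonneg (hf _ ⟨sub_nonneg.2 hs.2, by linarith [hs.1, ht.2]⟩)
        (ih s ⟨hs.1, hs.2.trans ht.2⟩)

lemma le_convPow (hfc : Continuous f) {b δ : ℝ} (hb : 0 ≤ b) (hδ : 0 ≤ δ)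
    (hf : ∀ x ∈ Set.Icc 0 T, 0 ≤ f x) (hbf : ∀ x ∈ Set.Icc δ T, b ≤ f x) (m : ℕ) :
    ∀ t ∈ Set.Icc ((2 * m + 1) * δ) T, δ ^ m * b ^ (m + 1) ≤ convPow f m t := by
  induction m with
  | zero => simpa [convPow_zero] using hbf
  | succ m ih =>
    rintro t ⟨htδ, htT⟩
    push_cast at htδ
    have hmδ : 0 ≤ m * δ := by positivity
    have hcont : Continuous fun s => f (t - s) * convPow f m s :=
      (by fun_prop : Continuous fun s => f (t - s)).mul (continuous_convPow hfc m)
    have hInt := fun a b => hcont.intervalIntegrable (μ := MeasureTheory.volume) a b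
    calc δ ^ (m + 1) * b ^ (m + 1 + 1)
        = ∫ _ in (t - 2 * δ)..(t - δ), b * (δ ^ m * b ^ (m + 1)) := by
          rw [intervalIntegral.integral_const, smul_eq_mul]
          ring
      _ ≤ ∫ s in (t - 2 * δ)..(t - δ), f (t - s) * convPow f m s := by
          refine intervalIntegral.integral_mono_on (by linarith) (by simp) (hInt _ _) fun s hs => ?_
          have hfb := hbf (t - s) ⟨by linarith [hs.2], by linarith [hs.1]⟩
          exact mul_le_mul hfb (ih s ⟨by linarith [hs.1], by linarith [hs.2]⟩) (by positivity)
            (hb.trans hfb)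
      _ ≤ ∫ s in (0 : ℝ)..t, f (t - s) * convPow f m s := by
          refine intervalIntegral.integral_mono_interval (by linarith) (by linarith) (by linarith)
            ?_ (hInt _ _)
          filter_upwards [MeasureTheory.ae_restrict_mem measurableSet_Ioc] with s hs
          exact mul_nonneg (hf _ ⟨by linarith [hs.2], by linarith [hs.1]⟩)
            (convPow_nonneg hf m s ⟨hs.1.le, by linarith [hs.2]⟩)

end ConvPow

section SineKernel

/-- The kernel `(2 sin (x / 2)) ^ n`, which equals `(exp (I x) - 1) ^ n` up to a phase. -/
noncomputable def sineKernel (n : ℕ) (x : ℝ) : ℝ := (2 * sin (x / 2)) ^ n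

lemma continuous_sineKernel (n : ℕ) : Continuous (sineKernel n) := by
  unfold sineKernel
  fun_prop

lemma abs_sineKernel_le (n : ℕ) {r : ℝ} (hr : 0 < r) {x : ℝ} (hx : 0 ≤ x) :
    |sineKernel n x| ≤ (r⁻¹) ^ n * exp (n * r * x) := by
  have h : |2 * sin (x / 2)| ≤ r⁻¹ * exp (r * x) := by
    have hsin : |sin (x / 2)| ≤ x / 2 := abs_sin_le_abs.trans_eq (abs_of_nonneg (by positivity))
    calc |2 * sin (x / 2)| = 2 * |sin (x / 2)| := by rw [abs_mul, abs_two]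
      _ ≤ x := by linarith
      _ = r⁻¹ * (r * x) := by field_simp
      _ ≤ r⁻¹ * exp (r * x) := by
          gcongr
          linarith [add_one_le_exp (r * x)]
  rw [sineKernel, abs_pow, mul_assoc, exp_nat_mul, ← mul_pow]
  gcongr

lemma le_sineKernel (n : ℕ) {x : ℝ} (hx : x ∈ Set.Icc 0 π) :
    (2 * x / π) ^ n ≤ sineKernel n x := by
  have h := mul_le_sin (x := x / 2) (by linarith [hx.1]) (by linarith [hx.2])
  have := hx.1
  unfold sineKernel
  gcongr
  calc 2 * x / π = 2 * (2 / π * (x / 2)) := by ring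
    _ ≤ 2 * sin (x / 2) := by gcongr

lemma abs_convPow_sineKernel_pi_le (m n : ℕ) {r : ℝ} (hr : 0 < r) :
    |convPow (sineKernel n) m π| ≤ π ^ m * (exp (r * π) / r ^ (m + 1)) ^ n := by
  refine (abs_convPow_le (fun x => abs_sineKernel_le n hr) m pi_pos.le).trans_eq ?_
  rw [mul_assoc (n : ℝ), exp_nat_mul, div_pow, ← pow_mul, ← pow_mul, inv_pow, mul_comm n]
  ring

lemma le_convPow_sineKernel_pi (m n : ℕ) :
    (π / (2 * m + 1)) ^ m * ((2 / (2 * m + 1)) ^ (m + 1)) ^ n ≤ convPow (sineKernel n) m π := by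
  have hδ : 0 < π / (2 * m + 1) := by positivity
  have h := le_convPow (continuous_sineKernel n) (b := (2 / (2 * m + 1)) ^ n) (by positivity)
    hδ.le (fun x hx => (by have := hx.1; positivity : (0 : ℝ) ≤ (2 * x / π) ^ n).trans
      (le_sineKernel n hx)) (fun x hx => ?_) m π ⟨by field_simp; rfl, le_rfl⟩
  · rwa [pow_right_comm] at h
  · refine le_trans ?_ (le_sineKernel n ⟨hδ.le.trans hx.1, hx.2⟩)
    refine pow_le_pow_left₀ (by positivity) ?_ n
    calc 2 / (2 * m + 1) = 2 * (π / (2 * m + 1)) / π := by field_simp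
      _ ≤ 2 * x / π := by gcongr; exact hx.1

end SineKernel

section ExpPoly

variable {d m n : ℕ}

/-- The exponential polynomial `∑ c (a, k) (d x) ^ a / a! * w ^ k` over `a ≤ m` and `k ≤ n`, where
`w` stands for `exp (I x)`. With divided powers of `d x`, convolution preserves the integrality of
the coefficients as soon as `d` is a common multiple of `1, …, n`. -/
noncomputable def expPoly (d m n : ℕ) (c : ℕ × ℕ → GaussianInt) (x : ℝ) (w : ℂ) : ℂ :=
  ∑ i ∈ Finset.range (m + 1) ×ˢ Finset.range (n + 1),
    (c i : ℂ) * ((d * x : ℂ) ^ i.1 / i.1 ! * w ^ i.2)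

/-- The term of `expPoly` of bidegree `(a, k)` at `w = exp (I t)`. -/
noncomputable def expMonomial (d a k : ℕ) (t : ℝ) : ℂ :=
  (d * t : ℂ) ^ a / a ! * Complex.exp (t * Complex.I) ^ k

/-- The sum of the sizes of the coefficients of `expPoly d m n c` with respect to `x ^ a / a!`. -/
noncomputable def expPolyWeight (d m n : ℕ) (c : ℕ × ℕ → GaussianInt) : ℝ :=
  ∑ i ∈ Finset.range (m + 1) ×ˢ Finset.range (n + 1), ‖(c i : ℂ)‖ * d ^ i.1

/-- `F t` is an exponential polynomial in `t` with weight at most `B`. -/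
def IsExpPoly (d m n : ℕ) (B : ℝ) (F : ℝ → ℂ) : Prop :=
  ∃ c : ℕ × ℕ → GaussianInt,
    (∀ t : ℝ, F t = expPoly d m n c t (Complex.exp (t * Complex.I))) ∧ expPolyWeight d m n c ≤ B

namespace IsExpPoly

variable {B C : ℝ} {F G : ℝ → ℂ}

lemma mono (hF : IsExpPoly d m n B F) (h : B ≤ C) : IsExpPoly d m n C F :=
  hF.imp fun _ hc => ⟨hc.1, hc.2.trans h⟩

lemma zero : IsExpPoly d m n 0 fun _ => 0 :=
  ⟨0, by simp [expPoly], by simp [expPolyWeight]⟩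

lemma add (hF : IsExpPoly d m n B F) (hG : IsExpPoly d m n C G) :
    IsExpPoly d m n (B + C) fun t => F t + G t := by
  obtain ⟨c, hc, hcB⟩ := hF
  obtain ⟨c', hc', hcC⟩ := hG
  refine ⟨c + c', fun t => ?_, le_trans ?_ (add_le_add hcB hcC)⟩
  · simp only [hc, hc', expPoly, ← Finset.sum_add_distrib, Pi.add_apply, map_add, add_mul]
  · rw [expPolyWeight, expPolyWeight, expPolyWeight, ← Finset.sum_add_distrib]
    gcongr with i
    rw [← add_mul, Pi.add_apply, map_add]
    gcongr
    exact norm_add_le _ _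

lemma const_mul (g : GaussianInt) (hF : IsExpPoly d m n B F) :
    IsExpPoly d m n (‖(g : ℂ)‖ * B) fun t => g * F t := by
  obtain ⟨c, hc, hcB⟩ := hF
  refine ⟨fun i => g * c i, fun t => ?_, le_trans ?_ (mul_le_mul_of_nonneg_left hcB (by simp))⟩
  · simp only [hc, expPoly, Finset.mul_sum, map_mul, mul_assoc]
  · simp only [expPolyWeight, Finset.mul_sum, map_mul, norm_mul, mul_assoc, le_refl]

lemma sum {ι : Type*} {B : ι → ℝ} {F : ι → ℝ → ℂ} (s : Finset ι)
    (hF : ∀ i ∈ s, IsExpPoly d m n (B i) (F i)) :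
    IsExpPoly d m n (∑ i ∈ s, B i) fun t => ∑ i ∈ s, F i t := by
  classical
  induction s using Finset.induction_on with
  | empty => simpa using zero
  | insert i s hi ih =>
    simp only [Finset.sum_insert hi]
    exact (hF i (s.mem_insert_self i)).add (ih fun j hj => hF j (Finset.mem_insert_of_mem hj))

lemma monomial {a k : ℕ} (ha : a ≤ m) (hk : k ≤ n) :
    IsExpPoly d m n (d ^ a) (expMonomial d a k) := by
  have hmem : (a, k) ∈ Finset.range (m + 1) ×ˢ Finset.range (n + 1) := by
    simp only [Finset.mem_product, Finset.mem_range]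
    omega
  refine ⟨Pi.single (a, k) 1, fun t => ?_, le_of_eq ?_⟩
  · rw [expPoly, Finset.sum_eq_single_of_mem _ hmem fun i _ hi => by
      rw [Pi.single_eq_of_ne hi, map_zero, zero_mul], Pi.single_eq_same, map_one, one_mul,
      expMonomial]
  · rw [expPolyWeight, Finset.sum_eq_single_of_mem _ hmem fun i _ hi => by
      rw [Pi.single_eq_of_ne hi, map_zero, norm_zero, zero_mul], Pi.single_eq_same, map_one,
      norm_one, one_mul]

end IsExpPoly

lemma factorial_mul_pow_mul_expPoly_mem_range (c : ℕ × ℕ → GaussianInt) (p : ℤ) {q : ℕ}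
    (hq : q ≠ 0) (w : GaussianInt) :
    (m ! * q ^ m : ℂ) * expPoly d m n c (p / q) w ∈ GaussianInt.toComplex.range := by
  rw [expPoly, Finset.mul_sum]
  refine sum_mem fun ⟨a, k⟩ hi => ?_
  simp only [Finset.mem_product, Finset.mem_range] at hi
  obtain ⟨b, rfl⟩ : ∃ b, m = a + b := Nat.exists_eq_add_of_le (by omega)
  obtain ⟨e, he⟩ := Nat.factorial_dvd_factorial (Nat.le_add_right a b)
  refine ⟨e * q ^ b * (d * p) ^ a * w ^ k * c (a, k), ?_⟩
  have ha : (a ! : ℂ) ≠ 0 := mod_cast a.factorial_ne_zero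
  rw [he]
  push_cast
  simp only [map_mul, map_pow, map_natCast, map_intCast, mul_pow, div_pow, pow_add]
  field_simp

lemma abs_pow_sub_pow_le_exp_mul {R x y : ℝ} (hx : |x| ≤ R) (hy : |y| ≤ R) (a : ℕ) :
    |x ^ a - y ^ a| / a ! ≤ exp R * |x - y| := by
  have hR : 0 ≤ R := (abs_nonneg x).trans hx
  rcases a with _ | a
  · simpa using by positivity
  · calc |x ^ (a + 1) - y ^ (a + 1)| / (a + 1)!
        ≤ |x - y| * (a + 1 : ℕ) * max |x| |y| ^ a / (a + 1)! := by
          gcongr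
          exact abs_pow_sub_pow_le x y (a + 1)
      _ = max |x| |y| ^ a / a ! * |x - y| := by
          rw [Nat.factorial_succ]
          push_cast
          field_simp
      _ ≤ R ^ a / a ! * |x - y| := by
          gcongr
          exact max_le hx hy
      _ ≤ exp R * |x - y| := by
          gcongr
          exact pow_div_factorial_le_exp R hR a

lemma norm_expPoly_sub_le (c : ℕ × ℕ → GaussianInt) {R x y : ℝ} (hx : |x| ≤ R) (hy : |y| ≤ R)
    {w : ℂ} (hw : ‖w‖ ≤ 1) :
    ‖expPoly d m n c x w - expPoly d m n c y w‖ ≤ expPolyWeight d m n c * (exp R * |x - y|) := by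
  rw [expPoly, expPoly, ← Finset.sum_sub_distrib, expPolyWeight, Finset.sum_mul]
  refine (norm_sum_le _ _).trans (Finset.sum_le_sum fun i _ => ?_)
  calc ‖(c i : ℂ) * ((d * x : ℂ) ^ i.1 / i.1 ! * w ^ i.2)
        - (c i : ℂ) * ((d * y : ℂ) ^ i.1 / i.1 ! * w ^ i.2)‖
      = ‖(c i : ℂ) * d ^ i.1 * (((x ^ i.1 - y ^ i.1 : ℝ) : ℂ) / i.1 ! * w ^ i.2)‖ := by
        push_cast
        ring_nf
    _ = ‖(c i : ℂ)‖ * d ^ i.1 * (|x ^ i.1 - y ^ i.1| / i.1 ! * ‖w‖ ^ i.2) := by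
        simp only [norm_mul, norm_div, norm_pow, Complex.norm_natCast, Complex.norm_real,
          Real.norm_eq_abs]
    _ ≤ ‖(c i : ℂ)‖ * d ^ i.1 * (exp R * |x - y| * 1) := by
        gcongr
        · exact abs_pow_sub_pow_le_exp_mul hx hy _
        · exact pow_le_one₀ (norm_nonneg w) hw
    _ = ‖(c i : ℂ)‖ * d ^ i.1 * (exp R * |x - y|) := by rw [mul_one]

end ExpPoly

section Convolution

lemma hasDerivAt_pow_succ_div_factorial (d : ℂ) (a : ℕ) (s : ℝ) :
    HasDerivAt (fun s : ℝ => (d * s) ^ (a + 1) / (a + 1)!) (d * ((d * s) ^ a / a !)) s := by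
  have h := ((((hasDerivAt_id s).ofReal_comp.const_mul d).pow (a + 1)).div_const
    ((a + 1)! : ℂ))
  refine h.congr_deriv ?_
  have ha : (a ! : ℂ) ≠ 0 := mod_cast a.factorial_ne_zero
  have ha' : (a + 1 : ℂ) ≠ 0 := mod_cast a.succ_ne_zero
  rw [Nat.factorial_succ]
  push_cast
  field_simp
  simp

lemma hasDerivAt_mul_cexp {d v ω : ℂ} (h : v * ω = d) (s : ℝ) :
    HasDerivAt (fun s : ℝ => v * Complex.exp (ω * s)) (d * Complex.exp (ω * s)) s := by
  refine (((hasDerivAt_id s).ofReal_comp.const_mul ω).cexp.const_mul v).congr_deriv ?_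
  rw [← h]
  simp only [id, mul_one, Complex.ofReal_one]
  ring

lemma mul_integral_pow_div_factorial (d : ℂ) (a : ℕ) (t : ℝ) :
    d * ∫ s in (0 : ℝ)..t, (d * s) ^ a / a ! = (d * t) ^ (a + 1) / (a + 1)! := by
  rw [← intervalIntegral.integral_const_mul, intervalIntegral.integral_eq_sub_of_hasDerivAt
    (fun s _ => hasDerivAt_pow_succ_div_factorial d a s)
    ((by fun_prop : Continuous _).intervalIntegrable _ _)]
  simp

variable {d v ω : ℂ}

lemma mul_integral_cexp (h : v * ω = d) (t : ℝ) :
    d * ∫ s in (0 : ℝ)..t, Complex.exp (ω * s) = v * Complex.exp (ω * t) - v := by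
  rw [← intervalIntegral.integral_const_mul, intervalIntegral.integral_eq_sub_of_hasDerivAt
    (fun s _ => hasDerivAt_mul_cexp h s) ((by fun_prop : Continuous _).intervalIntegrable _ _)]
  simp

lemma mul_integral_pow_succ_mul_cexp (h : v * ω = d) (a : ℕ) (t : ℝ) :
    d * ∫ s in (0 : ℝ)..t, (d * s) ^ (a + 1) / (a + 1)! * Complex.exp (ω * s)
      = v * ((d * t) ^ (a + 1) / (a + 1)! * Complex.exp (ω * t))
        - v * (d * ∫ s in (0 : ℝ)..t, (d * s) ^ a / a ! * Complex.exp (ω * s)) := by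
  have hparts := intervalIntegral.integral_mul_deriv_eq_deriv_mul (a := 0) (b := t)
    (fun s _ => hasDerivAt_pow_succ_div_factorial d a s) (fun s _ => hasDerivAt_mul_cexp h s)
    ((by fun_prop : Continuous _).intervalIntegrable _ _)
    ((by fun_prop : Continuous _).intervalIntegrable _ _)
  calc d * ∫ s in (0 : ℝ)..t, (d * s) ^ (a + 1) / (a + 1)! * Complex.exp (ω * s)
      = ∫ s in (0 : ℝ)..t, (d * s) ^ (a + 1) / (a + 1)! * (d * Complex.exp (ω * s)) := by
        simp only [← intervalIntegral.integral_const_mul, mul_left_comm]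
    _ = _ := by
        simp only [hparts, ← intervalIntegral.integral_const_mul]
        simp [mul_left_comm, mul_assoc]

end Convolution

section ExpConv

/-- `d` times the convolution of `exp (I l ·)` and `F` on the half-line. -/
noncomputable def expConv (d l : ℕ) (F : ℝ → ℂ) (t : ℝ) : ℂ :=
  d * ∫ s in (0 : ℝ)..t, Complex.exp ((t - s) * Complex.I) ^ l * F s

lemma continuous_expMonomial (d a k : ℕ) : Continuous (expMonomial d a k) := by
  unfold expMonomial
  fun_prop

lemma cexp_pow_mul_cexp_pow (k l : ℕ) (s t : ℝ) :
    Complex.exp ((t - s) * Complex.I) ^ l * Complex.exp (s * Complex.I) ^ k =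
      Complex.exp (t * Complex.I) ^ l * Complex.exp (((k - l : ℤ) * Complex.I) * s) := by
  simp only [← Complex.exp_nat_mul, ← Complex.exp_add]
  push_cast
  ring_nf

lemma cexp_pow_mul_cexp (k l : ℕ) (t : ℝ) :
    Complex.exp (t * Complex.I) ^ l * Complex.exp (((k - l : ℤ) * Complex.I) * t) =
      Complex.exp (t * Complex.I) ^ k := by
  simpa using (cexp_pow_mul_cexp_pow k l t t).symm

lemma expConv_expMonomial (d l a k : ℕ) (t : ℝ) :
    expConv d l (expMonomial d a k) t = Complex.exp (t * Complex.I) ^ l *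
      (d * ∫ s in (0 : ℝ)..t, (d * s : ℂ) ^ a / a ! *
        Complex.exp (((k - l : ℤ) * Complex.I) * s)) := by
  rw [mul_left_comm, ← intervalIntegral.integral_const_mul]
  simp only [expConv, expMonomial, mul_left_comm _ (_ / _), cexp_pow_mul_cexp_pow]

lemma expConv_expMonomial_self (d l a : ℕ) (t : ℝ) :
    expConv d l (expMonomial d a l) t = expMonomial d (a + 1) l t := by
  rw [expConv_expMonomial, expMonomial, ← mul_integral_pow_div_factorial, mul_comm]
  simp

variable {d k l : ℕ} {v : ℂ}

lemma expConv_expMonomial_zero (hv : v * ((k - l : ℤ) * Complex.I) = d) (t : ℝ) :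
    expConv d l (expMonomial d 0 k) t =
      v * expMonomial d 0 k t + -v * expMonomial d 0 l t := by
  have hintegral := mul_integral_cexp hv t
  simp only [expConv_expMonomial, expMonomial, pow_zero, Nat.factorial_zero, Nat.cast_one, div_one,
    one_mul, hintegral]
  linear_combination v * cexp_pow_mul_cexp k l t

lemma expConv_expMonomial_succ (hv : v * ((k - l : ℤ) * Complex.I) = d) (a : ℕ) (t : ℝ) :
    expConv d l (expMonomial d (a + 1) k) t =
      v * expMonomial d (a + 1) k t + -v * expConv d l (expMonomial d a k) t := by
  rw [expConv_expMonomial, mul_integral_pow_succ_mul_cexp hv, expConv_expMonomial, expMonomial]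
  linear_combination (v * ((d * t) ^ (a + 1) / (a + 1)!)) * cexp_pow_mul_cexp k l t

lemma expConv_sum {ι : Type*} (s : Finset ι) (c : ι → ℂ) {F : ι → ℝ → ℂ}
    (hF : ∀ i ∈ s, Continuous (F i)) :
    expConv d l (fun x => ∑ i ∈ s, c i * F i x) = fun t => ∑ i ∈ s, c i * expConv d l (F i) t := by
  funext t
  simp only [expConv, Finset.mul_sum]
  rw [intervalIntegral.integral_finsetSum fun i hi =>
    Continuous.intervalIntegrable (by have := hF i hi; fun_prop) _ _, Finset.mul_sum]
  refine Finset.sum_congr rfl fun i _ => ?_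
  simp only [mul_left_comm _ (c i), intervalIntegral.integral_const_mul]

lemma exists_gaussianInt_mul_eq {j : ℤ} (hj : j ∣ d) (hj₀ : j ≠ 0) :
    ∃ v : GaussianInt, (v : ℂ) * (j * Complex.I) = d ∧ ‖(v : ℂ)‖ ≤ d := by
  obtain ⟨e, he⟩ := hj
  have hv : GaussianInt.toComplex ⟨0, -e⟩ = -(e * Complex.I) := by
    simp [GaussianInt.toComplex_def']
  refine ⟨⟨0, -e⟩, ?_, ?_⟩
  · rw [hv, show (d : ℂ) = j * e by exact_mod_cast congr_arg (Int.cast (R := ℂ)) he]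
    linear_combination -(e * j : ℂ) * Complex.I_sq
  · have hle : (|e| : ℤ) ≤ d := by
      rw [← Nat.abs_cast d, he, abs_mul]
      exact le_mul_of_one_le_left (abs_nonneg e) (Int.one_le_abs hj₀)
    rw [hv, norm_neg, norm_mul, Complex.norm_I, mul_one, Complex.norm_intCast]
    exact_mod_cast hle

namespace IsExpPoly

variable {m n : ℕ}

lemma expConv_expMonomial (hd : ∀ j ∈ Set.Icc 1 n, j ∣ d) (hk : k ≤ n) (hl : l ≤ n) {a : ℕ}
    (ha : a ≤ m) :
    IsExpPoly d (m + 1) n ((a + 2) * d ^ (a + 1)) (expConv d l (expMonomial d a k)) := by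
  rcases eq_or_ne k l with rfl | hkl
  · simp only [funext (expConv_expMonomial_self d k a)]
    refine (monomial (Nat.succ_le_succ ha) hk).mono (le_mul_of_one_le_left (by positivity) ?_)
    linarith [a.cast_nonneg (α := ℝ)]
  obtain ⟨v, hv, hvd⟩ : ∃ v : GaussianInt,
      (v : ℂ) * ((k - l : ℤ) * Complex.I) = d ∧ ‖(v : ℂ)‖ ≤ d := by
    refine exists_gaussianInt_mul_eq (Int.natAbs_dvd.1 (Int.natCast_dvd_natCast.2 (hd _ ?_)))
      (by omega)
    simp only [Set.mem_Icc]
    omega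
  have hneg : ‖((-v : GaussianInt) : ℂ)‖ ≤ d := by rwa [map_neg, norm_neg]
  induction a with
  | zero =>
    simp only [funext (expConv_expMonomial_zero hv), ← map_neg]
    refine (((monomial (Nat.zero_le _) hk).const_mul v).add
      ((monomial (Nat.zero_le _) hl).const_mul (-v))).mono ?_
    simp only [pow_zero, Nat.cast_zero, zero_add, pow_one, mul_one]
    linarith
  | succ a ih =>
    simp only [funext (expConv_expMonomial_succ hv a), ← map_neg]
    refine (((monomial (by omega) hk).const_mul v).add
      ((ih (by omega)).const_mul (-v))).mono ?_
    calc ‖(v : ℂ)‖ * d ^ (a + 1) + ‖((-v : GaussianInt) : ℂ)‖ * ((a + 2) * d ^ (a + 1))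
        ≤ d * d ^ (a + 1) + d * ((a + 2) * d ^ (a + 1)) := by gcongr
      _ = ((a + 1 : ℕ) + 2) * d ^ (a + 1 + 1) := by push_cast; ring

lemma expConv {B : ℝ} {F : ℝ → ℂ} (hd : ∀ j ∈ Set.Icc 1 n, j ∣ d) (hl : l ≤ n)
    (hF : IsExpPoly d m n B F) : IsExpPoly d (m + 1) n ((m + 2) * d * B) (expConv d l F) := by
  obtain ⟨c, hc, hcB⟩ := hF
  have hF : F = fun t => ∑ i ∈ Finset.range (m + 1) ×ˢ Finset.range (n + 1),
      (c i : ℂ) * expMonomial d i.1 i.2 t := funext hc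
  rw [hF, expConv_sum _ _ fun i _ => continuous_expMonomial d i.1 i.2]
  refine (sum _ fun i hi => (expConv_expMonomial (m := m) hd ?_ hl ?_).const_mul (c i)).mono ?_
  · exact Nat.lt_succ_iff.1 (Finset.mem_range.1 (Finset.mem_product.1 hi).2)
  · exact Nat.lt_succ_iff.1 (Finset.mem_range.1 (Finset.mem_product.1 hi).1)
  · refine le_trans ?_ (mul_le_mul_of_nonneg_left hcB (by positivity))
    rw [expPolyWeight, Finset.mul_sum]
    refine Finset.sum_le_sum fun i hi => ?_
    have hi : i.1 ≤ m := Nat.lt_succ_iff.1 (Finset.mem_range.1 (Finset.mem_product.1 hi).1)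
    calc ‖(c i : ℂ)‖ * ((i.1 + 2) * d ^ (i.1 + 1))
        = (i.1 + 2) * d * (‖(c i : ℂ)‖ * d ^ i.1) := by ring
      _ ≤ (m + 2) * d * (‖(c i : ℂ)‖ * d ^ i.1) := by gcongr

end IsExpPoly

end ExpConv

section SineKernelExpansion

open Complex (I)

lemma cexp_sub_one_pow_eq (n : ℕ) (x : ℝ) :
    (Complex.exp (x * I) - 1) ^ n = (I * Complex.exp (x / 2 * I)) ^ n * sineKernel n x := by
  have hone : Complex.exp (x / 2 * I) * Complex.exp (-(x / 2) * I) = 1 := by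
    rw [← Complex.exp_add, neg_mul, add_neg_cancel, Complex.exp_zero]
  have hsq : Complex.exp (x * I) = Complex.exp (x / 2 * I) ^ 2 := by
    rw [← Complex.exp_nat_mul]
    push_cast
    ring_nf
  have h : Complex.exp (x * I) - 1 = I * Complex.exp (x / 2 * I) * (2 * Complex.sin (x / 2)) := by
    rw [hsq, Complex.two_sin]
    linear_combination -(Complex.exp (x / 2 * I) *
      (Complex.exp (-(x / 2) * I) - Complex.exp (x / 2 * I))) * Complex.I_sq + hone
  rw [h, mul_pow, sineKernel]
  push_cast
  rfl

/-- The coefficient of `z ^ l` in `(z - 1) ^ n`. -/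
def subOnePowCoeff (n l : ℕ) : GaussianInt := (-1) ^ (n - l) * n.choose l

lemma sub_one_pow_eq_sum (n : ℕ) (z : ℂ) :
    (z - 1) ^ n = ∑ l ∈ Finset.range (n + 1), (subOnePowCoeff n l : ℂ) * z ^ l := by
  rw [sub_eq_add_neg, add_pow]
  refine Finset.sum_congr rfl fun l _ => ?_
  simp only [subOnePowCoeff, map_mul, map_pow, map_neg, map_one, map_natCast]
  ring

lemma sum_norm_subOnePowCoeff (n : ℕ) :
    ∑ l ∈ Finset.range (n + 1), ‖(subOnePowCoeff n l : ℂ)‖ = 2 ^ n := by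
  simp only [subOnePowCoeff, map_mul, map_pow, map_neg, map_one, map_natCast, norm_mul, norm_pow,
    norm_neg, norm_one, one_pow, one_mul, Complex.norm_natCast]
  exact_mod_cast Nat.sum_range_choose n

/-- The convolution power of `sineKernel n`, rescaled by `d ^ m` and multiplied by the phase that
turns it into the convolution power of `(exp (I x) - 1) ^ n`. -/
noncomputable def phasedConvPow (d n m : ℕ) (t : ℝ) : ℂ :=
  (I ^ (m + 1) * Complex.exp (t / 2 * I)) ^ n * (d ^ m * convPow (sineKernel n) m t)

variable {d n : ℕ}

lemma continuous_phasedConvPow (d n m : ℕ) : Continuous (phasedConvPow d n m) := by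
  have := continuous_convPow (continuous_sineKernel n) m
  unfold phasedConvPow
  fun_prop

lemma phasedConvPow_zero (d n : ℕ) (t : ℝ) :
    phasedConvPow d n 0 t =
      ∑ l ∈ Finset.range (n + 1), (subOnePowCoeff n l : ℂ) * expMonomial d 0 l t := by
  simp only [expMonomial, pow_zero, Nat.factorial_zero, Nat.cast_one, div_one, one_mul,
    ← sub_one_pow_eq_sum, cexp_sub_one_pow_eq]
  simp [phasedConvPow, convPow_zero]

lemma mul_sub_one_pow_mul_phasedConvPow (d n m : ℕ) (s t : ℝ) :
    d * ((Complex.exp ((t - s) * I) - 1) ^ n * phasedConvPow d n m s) =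
      (I ^ (m + 2) * Complex.exp (t / 2 * I)) ^ n *
        (d ^ (m + 1) * (sineKernel n (t - s) * convPow (sineKernel n) m s : ℝ)) := by
  have hphase : (I ^ (m + 2) * Complex.exp (t / 2 * I)) ^ n =
      (I * Complex.exp ((t - s) / 2 * I)) ^ n * (I ^ (m + 1) * Complex.exp (s / 2 * I)) ^ n := by
    rw [← mul_pow, mul_mul_mul_comm, ← Complex.exp_add, ← pow_succ']
    ring_nf
  have := cexp_sub_one_pow_eq n (t - s)
  push_cast at this ⊢
  rw [this, hphase, phasedConvPow]
  ring

lemma phasedConvPow_succ (d n m : ℕ) (t : ℝ) :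
    phasedConvPow d n (m + 1) t = ∑ l ∈ Finset.range (n + 1),
      (subOnePowCoeff n l : ℂ) * expConv d l (phasedConvPow d n m) t := by
  have := continuous_phasedConvPow d n m
  calc phasedConvPow d n (m + 1) t
      = ∫ s in (0 : ℝ)..t, d * ((Complex.exp ((t - s) * I) - 1) ^ n * phasedConvPow d n m s) := by
        simp_rw [mul_sub_one_pow_mul_phasedConvPow]
        rw [intervalIntegral.integral_const_mul, intervalIntegral.integral_const_mul,
          intervalIntegral.integral_ofReal, ← convPow_succ, phasedConvPow]
    _ = ∑ l ∈ Finset.range (n + 1),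
          (subOnePowCoeff n l : ℂ) * expConv d l (phasedConvPow d n m) t := by
        simp only [sub_one_pow_eq_sum, Finset.sum_mul, Finset.mul_sum, expConv]
        rw [intervalIntegral.integral_finsetSum fun l _ =>
          Continuous.intervalIntegrable (by fun_prop) _ _]
        refine Finset.sum_congr rfl fun l _ => ?_
        simp only [← intervalIntegral.integral_const_mul, mul_assoc, mul_left_comm (d : ℂ)]

lemma isExpPoly_phasedConvPow (hd : ∀ j ∈ Set.Icc 1 n, j ∣ d) (m : ℕ) :
    IsExpPoly d m n ((2 ^ (m + 1)) ^ n * (m + 1)! * d ^ m) (phasedConvPow d n m) := by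
  induction m with
  | zero =>
    rw [funext (phasedConvPow_zero d n)]
    refine (IsExpPoly.sum _ fun l hl => (IsExpPoly.monomial le_rfl
      (Nat.lt_succ_iff.1 (Finset.mem_range.1 hl))).const_mul _).mono (le_of_eq ?_)
    simp [sum_norm_subOnePowCoeff]
  | succ m ih =>
    rw [funext (phasedConvPow_succ d n m)]
    refine (IsExpPoly.sum _ fun l hl => (IsExpPoly.expConv hd
      (Nat.lt_succ_iff.1 (Finset.mem_range.1 hl)) ih).const_mul _).mono (le_of_eq ?_)
    rw [← Finset.sum_mul, sum_norm_subOnePowCoeff, Nat.factorial_succ (m + 1),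
      pow_succ 2 (m + 1), mul_pow]
    push_cast
    ring

lemma norm_phasedConvPow (d n m : ℕ) (t : ℝ) :
    ‖phasedConvPow d n m t‖ = d ^ m * |convPow (sineKernel n) m t| := by
  have hexp : ‖Complex.exp (t / 2 * I)‖ = 1 := by
    exact_mod_cast Complex.norm_exp_ofReal_mul_I (t / 2)
  simp [phasedConvPow, hexp]

end SineKernelExpansion

section PiFinite

variable {z w : ℂ} {m n q : ℕ} {p : ℤ}

lemma one_le_norm_toComplex {g : GaussianInt} (hg : g ≠ 0) : 1 ≤ ‖(g : ℂ)‖ := by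
  have h : (1 : ℝ) ≤ g.norm := mod_cast GaussianInt.norm_pos.2 hg
  rw [GaussianInt.intCast_real_norm, Complex.normSq_eq_norm_sq] at h
  exact (one_le_sq_iff₀ (norm_nonneg _)).1 h

lemma norm_le_norm_sub_of_mul_mem_range {D : ℂ} (hD : D ≠ 0)
    (hw : D * w ∈ GaussianInt.toComplex.range) (hz : 2 * (‖D‖ * ‖z‖) ≤ 1) : ‖z‖ ≤ ‖z - w‖ := by
  obtain ⟨g, hg⟩ := hw
  rcases eq_or_ne g 0 with rfl | hg₀
  · have hw : w = 0 := by simpa [hD] using hg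
    rw [hw, sub_zero]
  · have hDw : 1 ≤ ‖D‖ * ‖w‖ := by
      rw [← norm_mul, ← hg]
      exact one_le_norm_toComplex hg₀
    have hzw : ‖w‖ - ‖z‖ ≤ ‖z - w‖ := norm_sub_rev z w ▸ norm_sub_norm_le w z
    have hD' : 0 < ‖D‖ := norm_pos_iff.2 hD
    have : 2 * ‖z‖ ≤ ‖w‖ := le_of_mul_le_mul_left (by linarith) hD'
    linarith

lemma dvd_lcmUpto {j : ℕ} (hj : j ∈ Set.Icc 1 n) : j ∣ n.lcmUpto :=
  Finset.dvd_lcm (f := id) (Finset.mem_Icc.2 hj)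

lemma lcmUpto_le_pow (n : ℕ) : (n.lcmUpto : ℝ) ≤ exp (log 4 + 4) ^ n := by
  have h := Chebyshev.psi_le_const_mul_self (x := n) (by positivity)
  rwa [Chebyshev.psi_eq_log_lcmUpto, log_le_iff_le_exp (mod_cast n.lcmUpto_pos), mul_comm,
    exp_nat_mul] at h

lemma abs_convPow_sineKernel_pi_le_mul_abs_sub {d : ℕ} (hd : ∀ j ∈ Set.Icc 1 n, j ∣ d)
    (hd₀ : 0 < d) (hq : q ≠ 0) (hpq : |(p / q : ℝ)| ≤ 5)
    (hsmall : 2 * (m ! * q ^ m * (d ^ m * |convPow (sineKernel n) m π|)) ≤ 1) :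
    |convPow (sineKernel n) m π| ≤
      (2 ^ (m + 1)) ^ n * (m + 1)! * (exp 5 * |π - p / q|) := by
  obtain ⟨c, hc, hcB⟩ := isExpPoly_phasedConvPow hd m
  have hw : Complex.exp (π * Complex.I) = ((-1 : GaussianInt) : ℂ) := by
    rw [Complex.exp_pi_mul_I, map_neg, map_one]
  have hD : (m ! * q ^ m : ℂ) ≠ 0 := mod_cast (by positivity : m ! * q ^ m ≠ 0)
  have hgap : ‖phasedConvPow d n m π‖ ≤
      ‖phasedConvPow d n m π - expPoly d m n c (p / q : ℝ) (-1 : GaussianInt)‖ := by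
    refine norm_le_norm_sub_of_mul_mem_range hD ?_ ?_
    · exact_mod_cast factorial_mul_pow_mul_expPoly_mem_range c p hq (-1)
    · simpa only [norm_phasedConvPow, norm_mul, norm_pow, Complex.norm_natCast] using hsmall
  rw [norm_phasedConvPow, hc, hw] at hgap
  have hle : (d : ℝ) ^ m * |convPow (sineKernel n) m π| ≤
      d ^ m * ((2 ^ (m + 1)) ^ n * (m + 1)! * (exp 5 * |π - p / q|)) :=
    calc (d : ℝ) ^ m * |convPow (sineKernel n) m π|
        ≤ expPolyWeight d m n c * (exp 5 * |π - p / q|) := by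
          refine hgap.trans (norm_expPoly_sub_le c ?_ hpq (by simp))
          rw [abs_of_pos pi_pos]
          linarith [pi_lt_four]
      _ ≤ (2 ^ (m + 1)) ^ n * (m + 1)! * d ^ m * (exp 5 * |π - p / q|) := by gcongr
      _ = d ^ m * ((2 ^ (m + 1)) ^ n * (m + 1)! * (exp 5 * |π - p / q|)) := by ring
  exact le_of_mul_le_mul_left hle (by positivity)

lemma exists_pow_mul_abs_convPow_sineKernel_pi_le {C : ℝ} (hC : 0 < C) :
    ∃ m : ℕ, ∀ n : ℕ, (C ^ m) ^ n * |convPow (sineKernel n) m π| ≤ π ^ m / 2 ^ n := by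
  obtain ⟨m, hm⟩ := pow_unbounded_of_one_lt (exp (2 * C * π) / C) one_lt_two
  refine ⟨m, fun n => ?_⟩
  calc (C ^ m) ^ n * |convPow (sineKernel n) m π|
      ≤ (C ^ m) ^ n * (π ^ m * (exp (2 * C * π) / (2 * C) ^ (m + 1)) ^ n) := by
        gcongr
        exact abs_convPow_sineKernel_pi_le m n (by positivity)
    _ = π ^ m * (exp (2 * C * π) / C / 2 ^ (m + 1)) ^ n := by
        rw [mul_left_comm, ← mul_pow]
        congr 2
        rw [mul_pow, pow_succ C]
        field_simp
    _ ≤ π ^ m * (2 ^ m / 2 ^ (m + 1)) ^ n := by gcongr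
    _ = π ^ m / 2 ^ n := by
        rw [pow_succ, div_mul_cancel_left₀ (by positivity), inv_pow, div_eq_mul_inv]

lemma exists_forall_mul_pow_le_abs_pi_sub :
    ∃ (m : ℕ) (K κ ρ : ℝ), 1 ≤ K ∧ 0 < κ ∧ 0 < ρ ∧ ∀ (n q : ℕ) (p : ℤ), q ≠ 0 →
      |π - p / q| ≤ 1 → K * q ^ m ≤ 2 ^ n → κ * ρ ^ n ≤ |π - p / q| := by
  obtain ⟨m, hm⟩ := exists_pow_mul_abs_convPow_sineKernel_pi_le (exp_pos (log 4 + 4))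
  refine ⟨m, 2 * (m ! * π ^ m), (π / (2 * m + 1)) ^ m / ((m + 1)! * exp 5),
    (1 / (2 * m + 1)) ^ (m + 1), ?_, by positivity, by positivity, fun n q p hq hpq hn => ?_⟩
  · have hπ : 1 ≤ π := by linarith [pi_gt_three]
    have : (1 : ℝ) ≤ m ! := mod_cast m.factorial_pos
    have := one_le_mul_of_one_le_of_one_le this (one_le_pow₀ (n := m) hπ)
    linarith
  have hdU : (n.lcmUpto : ℝ) ^ m * |convPow (sineKernel n) m π| ≤ π ^ m / 2 ^ n := by
    refine le_trans ?_ (hm n)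
    rw [pow_right_comm]
    gcongr
    exact lcmUpto_le_pow n
  have hsmall : 2 * (m ! * q ^ m * (n.lcmUpto ^ m * |convPow (sineKernel n) m π|)) ≤ 1 :=
    calc 2 * (m ! * q ^ m * (n.lcmUpto ^ m * |convPow (sineKernel n) m π|))
        ≤ 2 * (m ! * q ^ m * (π ^ m / 2 ^ n)) := by gcongr
      _ = 2 * (m ! * π ^ m) * q ^ m / 2 ^ n := by ring
      _ ≤ 1 := div_le_one_of_le₀ hn (by positivity)
  have hpq5 : |(p / q : ℝ)| ≤ 5 := by
    rw [abs_le] at hpq ⊢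
    constructor <;> linarith [hpq.1, hpq.2, pi_pos, pi_lt_four]
  have hchain := (le_convPow_sineKernel_pi m n).trans <| (le_abs_self _).trans <|
    abs_convPow_sineKernel_pi_le_mul_abs_sub (fun j hj => dvd_lcmUpto hj) n.lcmUpto_pos hq hpq5
      hsmall
  rw [div_eq_mul_one_div 2, mul_pow, mul_pow, mul_left_comm, mul_assoc _ ((m + 1)! : ℝ)] at hchain
  rw [div_mul_eq_mul_div, div_le_iff₀ (by positivity), mul_comm |π - _|, mul_assoc]
  exact le_of_mul_le_mul_left hchain (by positivity)

lemma exists_div_den_pow_le_abs_pi_sub :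
    ∃ c > 0, ∃ ν : ℕ, ∀ r : ℚ, c / (r.den : ℝ) ^ ν ≤ |π - r| := by
  obtain ⟨m, K, κ, ρ, hK, hκ, hρ, H⟩ := exists_forall_mul_pow_le_abs_pi_sub
  obtain ⟨s, hs⟩ := pow_unbounded_of_one_lt ρ⁻¹ one_lt_two
  refine ⟨min 1 (κ / (2 * K) ^ s), by positivity, m * s, fun r => ?_⟩
  have hden : (1 : ℝ) ≤ r.den := mod_cast r.den_pos
  rcases le_total 1 |π - r| with hr | hr
  · refine le_trans (div_le_one_of_le₀ ?_ (by positivity)) hr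
    exact (min_le_left _ _).trans (one_le_pow₀ hden)
  obtain ⟨n, hn, hn'⟩ := exists_nat_pow_near
    (one_le_mul_of_one_le_of_one_le hK (one_le_pow₀ (n := m) hden)) one_lt_two
  rw [Rat.cast_def] at hr ⊢
  calc min 1 (κ / (2 * K) ^ s) / (r.den : ℝ) ^ (m * s)
      ≤ κ / (2 * K) ^ s / (r.den : ℝ) ^ (m * s) := by
        gcongr
        exact min_le_right _ _
    _ = κ / (2 * (K * r.den ^ m)) ^ s := by
        rw [div_div, pow_mul, ← mul_pow, mul_assoc]
    _ ≤ κ / (2 ^ (n + 1)) ^ s := by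
        rw [pow_succ']
        gcongr
    _ = κ * ((2 ^ s)⁻¹) ^ (n + 1) := by
        rw [inv_pow, pow_right_comm, div_eq_mul_inv]
    _ ≤ κ * ρ ^ (n + 1) := by
        gcongr
        exact inv_le_of_inv_le₀ hρ hs.le
    _ ≤ |π - r.num / r.den| := H (n + 1) r.den r.num r.den_ne_zero hr hn'.le

lemma exists_approximants_pi_finite : ∃ μ, (approximants π μ).Finite := by
  obtain ⟨c, hc, ν, H⟩ := exists_div_den_pow_le_abs_pi_sub
  exact ⟨ν + 1, approximants_finite_of_le_abs_sub hc ν.cast_nonneg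
    (by simpa only [rpow_natCast] using H) (lt_add_one _)⟩

end PiFinite

section Threshold

variable {α γ : ℝ}

lemma limsup_abs_cos_pi_mul_div_rpow_eq_one (hα : 0 < α) (hirr : Irrational α)
    (hγ₀ : 0 ≤ γ) (hγ : γ < 2 * irrationalityMeasure α - 2) :
    limsup (fun k : ℕ => |cos (π * (k / α))| ^ ((k : ℝ) ^ γ)) atTop = 1 := by
  obtain ⟨μ, hμ, hμα⟩ : ∃ μ, γ / 2 + 1 < μ ∧ μ < irrationalityMeasure α :=
    exists_between (by linarith)
  obtain ⟨C, hC⟩ := exists_frequently_abs_div_sub_round_le hα (by linarith)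
    (approximants_infinite_of_lt_irrationalityMeasure hirr hμα)
  exact limsup_abs_cos_pi_mul_rpow_eq_one hC hγ₀ (by linarith)

lemma tendsto_abs_cos_pi_mul_div_rpow_zero (hα : 0 < α) (hirr : Irrational α)
    (h : ∃ μ, (approximants α μ).Finite) (hγ : 2 * irrationalityMeasure α - 2 < γ) :
    Tendsto (fun k : ℕ => |cos (π * (k / α))| ^ ((k : ℝ) ^ γ)) atTop (𝓝 0) := by
  obtain ⟨μ, hαμ, hμ⟩ : ∃ μ, irrationalityMeasure α < μ ∧ μ < γ / 2 + 1 :=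
    exists_between (by linarith)
  have hμ₁ : 1 ≤ μ := by linarith [two_le_irrationalityMeasure hirr h]
  obtain ⟨c, hc, H⟩ := exists_forall_div_den_rpow_le hirr (by linarith)
    (approximants_finite_of_irrationalityMeasure_lt h hαμ)
  obtain ⟨c', hc', H'⟩ := exists_eventually_le_abs_div_sub_round hα hμ₁ hc H
  exact tendsto_abs_cos_pi_mul_rpow_zero hc' H' (by linarith)

theorem sup_Phi_eq_two_mu_pi_sub_two_general (hα : 0 < α) (hirr : Irrational α)
    (h : ∃ μ, (approximants α μ).Finite) :
    sSup {γ : ℝ | 0 ≤ γ ∧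
        limsup (fun k : ℕ => |cos (π * (k / α))| ^ ((k : ℝ) ^ γ)) atTop = 1}
      = 2 * irrationalityMeasure α - 2 := by
  have hpos : 0 < 2 * irrationalityMeasure α - 2 := by
    linarith [two_le_irrationalityMeasure hirr h]
  refine csSup_eq_of_forall_le_of_forall_lt_exists_gt
    ⟨0, le_rfl, limsup_abs_cos_pi_mul_div_rpow_eq_one hα hirr le_rfl hpos⟩ ?_ ?_
  · rintro γ ⟨-, hγ⟩
    by_contra! hlt
    exact zero_ne_one ((tendsto_abs_cos_pi_mul_div_rpow_zero hα hirr h hlt).limsup_eq ▸ hγ)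
  · intro w hw
    obtain ⟨γ, hγ₁, hγ₂⟩ := exists_between (max_lt hw hpos)
    obtain ⟨hwγ, hγ₀⟩ := max_lt_iff.1 hγ₁
    exact ⟨γ, ⟨hγ₀.le, limsup_abs_cos_pi_mul_div_rpow_eq_one hα hirr hγ₀.le hγ₂⟩, hwγ⟩

end Threshold

/-- `sup Φ = 2 μ(π) - 2`, where
`Φ = {γ ≥ 0 : limsup_{k → ∞} |cos k| ^ (k ^ γ) = 1}`. -/
theorem sup_Phi_eq_two_mu_pi_sub_two :
    sSup {γ : ℝ | 0 ≤ γ ∧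
        Filter.limsup (fun k : ℕ => |Real.cos k| ^ ((k : ℝ) ^ γ)) Filter.atTop = 1}
      = 2 * irrationalityMeasure Real.pi - 2 := by
  simpa only [mul_div_cancel₀ _ pi_ne_zero] using
    sup_Phi_eq_two_mu_pi_sub_two_general pi_pos irrational_pi exists_approximants_pi_finite
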